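/- Assume hypotheses (H1)–(H5) and (H6). Then for every solution x : ℤ → ℝⁿ of model (1) with initial time σ ∈ ℕ and bounded initial condition, there exists a vector S = (S_1,…,S_n) with S_i ≥ 0 such that limsup_{m→∞} |x_i(m)| ≤ S_i for every i, and S satisfies the system S_i = (1/(1−â_i)) ∑_{j=1}^n ( ĉ_{ij} g*_{ij}(S_j) + ∑_{p=1}^P b̂_{ijp} f*_{ijp}(S_j) ) for all i ∈ {1,…,n}. (Lemma 3.2, item i.) -/

import Mathlib

/-!
The limsups `s i` of the `|x m i|` satisfy the inequality version `s ≤ Φ s` of the system, where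
`Φ` is the right-hand side, and the least upper bound of all `u ≥ s` with `u ≤ Φ u` is a fixed
point of `Φ`, because `Φ` is monotone and bounded on nonnegative vectors (Knaster–Tarski).
No continuity of `Φ` is needed for this.

That the `s i` are finite follows from (H1): the forcing part of the equation is bounded since the
activations are, and `|x (m + 1) i| ≤ α |x (m - ν) i| + H` with `α < 1` keeps the `i`-th component
below `max B (H / (1 - α))`. The inequality `s ≤ Φ s` is obtained with the relation
`AsympLe l u L` ("`limsup |u| ≤ L` along `l`"), which is stable under sums, products and time
changes (`AsympLe.add`, `AsympLe.mul`, `AsympLe.comp`), under activations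
(`AsympLe.activation`, where compactness replaces continuity of `fstar`), and under the
distributed delay (`AsympLe.kernel`, by dominated convergence). Taking `l = ⊤` turns the same
relation into a uniform bound, so that `forcing_asympLe` serves both purposes.
-/

/-- `fplus f x` is the maximum of `f` on the interval between `0` and `x`. -/
noncomputable def fplus (f : ℝ → ℝ) (x : ℝ) : ℝ := sSup (f '' Set.uIcc 0 x)

/-- `fminus f x` is the minimum of `f` on the interval between `0` and `x`. -/
noncomputable def fminus (f : ℝ → ℝ) (x : ℝ) : ℝ := sInf (f '' Set.uIcc 0 x)

/-- `fstar f x = max {f₊(x), f₊(-x), -f₋(x), -f₋(-x)}`. -/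
noncomputable def fstar (f : ℝ → ℝ) (x : ℝ) : ℝ :=
  max (max (fplus f x) (fplus f (-x))) (max (-(fminus f x)) (-(fminus f (-x))))

open Filter Topology

/-! ### Asymptotic bounds -/

/-- `limsup |u| ≤ L` along `l`, with boundedness built in: every `K > L` eventually bounds `|u|`.
For `l = ⊤` this says that `|u| ≤ L` everywhere. -/
def AsympLe {α : Type*} (l : Filter α) (u : α → ℝ) (L : ℝ) : Prop :=
  ∀ K, L < K → ∀ᶠ m in l, |u m| ≤ K

namespace AsympLe

variable {α β : Type*} {l : Filter α} {u v : α → ℝ} {L L' : ℝ}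

theorem of_le (h : ∀ m, |u m| ≤ L) : AsympLe l u L :=
  fun _ hK => Eventually.of_forall fun m => (h m).trans hK.le

theorem add (hu : AsympLe l u L) (hv : AsympLe l v L') :
    AsympLe l (fun m => u m + v m) (L + L') := by
  intro K hK
  filter_upwards [hu (L + (K - L - L') / 2) (by linarith),
    hv (L' + (K - L - L') / 2) (by linarith)] with m h1 h2
  exact (abs_add_le _ _).trans (by linarith)

theorem sum {ι : Type*} (s : Finset ι) {u : ι → α → ℝ} {L : ι → ℝ}
    (h : ∀ i, AsympLe l (u i) (L i)) :
    AsympLe l (fun m => ∑ i ∈ s, u i m) (∑ i ∈ s, L i) := by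
  classical
  induction s using Finset.induction_on with
  | empty => exact of_le (by simp)
  | insert i s hi ih =>
    simp only [Finset.sum_insert hi]
    exact (h i).add ih

theorem mul (hL : 0 ≤ L) (hu : AsympLe l u L) (hv : AsympLe l v L') :
    AsympLe l (fun m => u m * v m) (L * L') := by
  intro K hK
  have hcont : Tendsto (fun d : ℝ => (L + d) * (L' + d)) (𝓝[>] 0) (𝓝 (L * L')) := by
    have : Continuous fun d : ℝ => (L + d) * (L' + d) := by fun_prop
    simpa using (this.tendsto 0).mono_left nhdsWithin_le_nhds
  obtain ⟨d, hd, hd0⟩ := ((hcont.eventually_lt_const hK).and self_mem_nhdsWithin).exists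
  have hd0 : 0 < d := hd0
  filter_upwards [hu (L + d) (by linarith), hv (L' + d) (by linarith)] with m h1 h2
  rw [abs_mul]
  exact (mul_le_mul h1 h2 (abs_nonneg _) (by linarith)).trans hd.le

theorem comp {l' : Filter β} {t : β → α} (hu : AsympLe l u L) (ht : Tendsto t l' l) :
    AsympLe l' (fun m => u (t m)) L :=
  fun K hK => ht.eventually (hu K hK)

theorem of_tendsto_zero (h : Tendsto u l (𝓝 0)) : AsympLe l u 0 := by
  intro K hK
  have : Tendsto (fun m => |u m|) l (𝓝 0) := by simpa using h.abs
  exact (this.eventually_lt_const hK).mono fun _ h => h.le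

theorem of_bounded {C : ℝ} (h : ∀ m, |u m| ≤ C) :
    AsympLe l u (limsup (fun m => |u m|) l) := by
  intro K hK
  exact (eventually_lt_of_limsup_lt hK (isBoundedUnder_of ⟨C, h⟩)).mono fun _ h => h.le

theorem limsup_le [l.NeBot] (hu : AsympLe l u L) : limsup (fun m => |u m|) l ≤ L := by
  refine le_of_forall_gt_imp_ge_of_dense fun K hK => ?_
  exact limsup_le_of_le
    (IsBoundedUnder.isCoboundedUnder_le (isBoundedUnder_of ⟨0, fun m => abs_nonneg (u m)⟩))
    (hu K hK)

end AsympLe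

theorem limsup_abs_nonneg {α : Type*} {l : Filter α} [l.NeBot] {u : α → ℝ} {C : ℝ}
    (h : ∀ m, |u m| ≤ C) : 0 ≤ limsup (fun m => |u m|) l :=
  le_limsup_of_frequently_le (Frequently.of_forall fun _ => abs_nonneg _)
    (isBoundedUnder_of ⟨C, h⟩)

/-! ### The function `fstar` as the supremum of `|f|` on `[-s, s]` -/

theorem abs_le_fstar {f : ℝ → ℝ} (hf : Continuous f) {s y : ℝ} (hy : |y| ≤ s) :
    |f y| ≤ fstar f s := by
  have key : ∀ t, y ∈ Set.uIcc 0 t → fminus f t ≤ f y ∧ f y ≤ fplus f t := fun t ht =>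
    have hc : IsCompact (f '' Set.uIcc 0 t) := isCompact_uIcc.image hf
    ⟨csInf_le hc.bddBelow ⟨y, ht, rfl⟩, le_csSup hc.bddAbove ⟨y, ht, rfl⟩⟩
  have h1 := abs_le.mp hy
  unfold fstar
  rcases le_total 0 y with h0 | h0
  · have := key s (by rw [Set.uIcc_of_le (h0.trans h1.2)]; exact ⟨h0, h1.2⟩)
    rw [abs_le']
    constructor <;> simp only [le_max_iff]
    · exact Or.inl (Or.inl this.2)
    · exact Or.inr (Or.inl (by linarith))
  · have := key (-s) (by rw [Set.uIcc_of_ge (by linarith)]; exact ⟨h1.1, h0⟩)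
    rw [abs_le']
    constructor <;> simp only [le_max_iff]
    · exact Or.inl (Or.inr this.2)
    · exact Or.inr (Or.inr (by linarith))

theorem fstar_le {f : ℝ → ℝ} {s C : ℝ} (hs : 0 ≤ s) (h : ∀ y, |y| ≤ s → |f y| ≤ C) :
    fstar f s ≤ C := by
  have key : ∀ t, |t| = s → fplus f t ≤ C ∧ -(fminus f t) ≤ C := by
    intro t ht
    have hne : (f '' Set.uIcc 0 t).Nonempty := Set.nonempty_uIcc.image f
    have hb : ∀ y ∈ Set.uIcc 0 t, |f y| ≤ C := fun y hy => h y (by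
      simpa [ht] using Set.abs_sub_left_of_mem_uIcc hy)
    refine ⟨csSup_le hne ?_, neg_le.mp (le_csInf hne ?_)⟩
    · rintro _ ⟨y, hy, rfl⟩
      exact (le_abs_self _).trans (hb y hy)
    · rintro _ ⟨y, hy, rfl⟩
      exact (abs_le.mp (hb y hy)).1
  have h1 := key s (abs_of_nonneg hs)
  have h2 := key (-s) (by rw [abs_neg, abs_of_nonneg hs])
  exact max_le (max_le h1.1 h2.1) (max_le h1.2 h2.2)

theorem fstar_nonneg {f : ℝ → ℝ} (hf : Continuous f) {s : ℝ} (hs : 0 ≤ s) : 0 ≤ fstar f s :=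
  (abs_nonneg _).trans (abs_le_fstar hf (y := 0) (by simpa using hs))

theorem fstar_mono {f : ℝ → ℝ} (hf : Continuous f) {s t : ℝ} (hs : 0 ≤ s) (hst : s ≤ t) :
    fstar f s ≤ fstar f t :=
  fstar_le hs fun _ hy => abs_le_fstar hf (hy.trans hst)

theorem AsympLe.activation {α : Type*} {l : Filter α} {u : α → ℝ} {L : ℝ} {f : ℝ → ℝ}
    (hf : Continuous f) (hL : 0 ≤ L) (hu : AsympLe l u L) :
    AsympLe l (fun m => f (u m)) (fstar f L) := by
  intro K hK
  -- `{|f| < K}` is an open neighbourhood of the compact ball of radius `L`, so it contains a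
  -- slightly larger ball.
  obtain ⟨d, hd, hsub⟩ := (isCompact_closedBall (0 : ℝ) L).exists_cthickening_subset_open
    (t := {y | |f y| < K}) (isOpen_lt hf.abs continuous_const)
    (fun y hy => (abs_le_fstar hf (by simpa using hy)).trans_lt hK)
  rw [cthickening_closedBall hd.le hL] at hsub
  filter_upwards [hu (d + L) (by linarith)] with m hm
  have h : |f (u m)| < K := hsub (by simpa using hm)
  exact h.le

/-- The hypothesis (H6) on one activation makes it globally bounded; continuity is what forces
`f 0 = 0`. -/
theorem abs_le_of_H6 {f : ℝ → ℝ} {F : ℝ} (h : Continuous f ∧ 0 < F ∧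
      (∀ u : ℝ, 1 < |u| → |f u| ≤ F) ∧ (∀ u : ℝ, u ≠ 0 → |u| ≤ 1 → |f u| < F * |u|)) (u : ℝ) :
    |f u| ≤ F := by
  obtain ⟨hc, hF, h1, h2⟩ := h
  have hne : ∀ u, u ≠ 0 → |f u| ≤ F := by
    intro u hu
    rcases le_or_gt |u| 1 with h | h
    · exact (h2 u hu h).le.trans (by nlinarith)
    · exact h1 u h
  by_cases hu : u = 0
  · subst hu
    exact le_of_tendsto ((hc.abs.tendsto 0).mono_left nhdsWithin_le_nhds)
      (eventually_mem_nhdsWithin.mono hne : ∀ᶠ u in 𝓝[≠] (0 : ℝ), |f u| ≤ F)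
  · exact hne u hu

/-! ### Distributed delay and the forcing part of the equation -/

theorem abs_kernel_le {ζ w : ℕ → ℝ} {C : ℝ} (hζ : ∑' l, |ζ l| = 1) (hw : ∀ l, |w l| ≤ C) :
    |∑' l, ζ l * w l| ≤ C := by
  have hs : Summable fun l => |ζ l| := by
    by_contra h
    simp [tsum_eq_zero_of_not_summable h] at hζ
  have hle : ∀ l, ‖ζ l * w l‖ ≤ |ζ l| * C := fun l => by
    rw [Real.norm_eq_abs, abs_mul]
    exact mul_le_mul_of_nonneg_left (hw l) (abs_nonneg _)
  have h := tsum_of_norm_bounded (hs.hasSum.mul_right C) hle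
  rwa [hζ, one_mul] at h

/-- For `N` fixed and `m` large, only the tail of the kernel sees the times before `N`, so averaging
against the kernel does not increase the limsup. -/
theorem AsympLe.kernel {ζ : ℕ → ℝ} (hζ : ∑' l, |ζ l| = 1) {v : ℤ → ℝ} {C L : ℝ}
    (hC : ∀ k, |v k| ≤ C) (hv : AsympLe atTop v L) :
    AsympLe atTop (fun m : ℕ => ∑' l : ℕ, ζ l * v ((m : ℤ) - l)) L := by
  intro K hK
  obtain ⟨K', hK', hK'K⟩ := exists_between hK
  obtain ⟨N, hN⟩ := eventually_atTop.mp (hv K' hK')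
  have hs : Summable fun l => |ζ l| := by
    by_contra h
    simp [tsum_eq_zero_of_not_summable h] at hζ
  -- the excess of `|v|` over `K'` is supported on times before `N`
  set w : ℤ → ℝ := fun k => max (|v k| - K') 0 with hw
  have hw0 : ∀ k, 0 ≤ w k := fun k => le_max_right _ _
  have hwC : ∀ k, w k ≤ max (C - K') 0 := fun k => max_le_max (by linarith [hC k]) le_rfl
  have hwN : ∀ k, N ≤ k → w k = 0 := fun k hk => max_eq_right (by linarith [hN k hk])
  have hvw : ∀ k, |v k| ≤ K' + w k := fun k => by linarith [le_max_left (|v k| - K') 0]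
  have hdom : ∀ m l : ℕ, ‖|ζ l| * w ((m : ℤ) - l)‖ ≤ |ζ l| * max (C - K') 0 := fun m l => by
    rw [Real.norm_eq_abs, abs_mul, abs_abs, abs_of_nonneg (hw0 _)]
    exact mul_le_mul_of_nonneg_left (hwC _) (abs_nonneg _)
  have hlim : Tendsto (fun m : ℕ => ∑' l : ℕ, |ζ l| * w ((m : ℤ) - l)) atTop (𝓝 0) := by
    have := tendsto_tsum_of_dominated_convergence (𝓕 := atTop)
      (f := fun (m : ℕ) (l : ℕ) => |ζ l| * w ((m : ℤ) - l)) (g := fun _ => 0)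
      (hs.mul_right (max (C - K') 0)) (fun l => ?_) (Eventually.of_forall hdom)
    · simpa using this
    · refine tendsto_const_nhds.congr' ?_
      filter_upwards [eventually_ge_atTop (N.toNat + l)] with m hm
      rw [hwN _ (by omega), mul_zero]
  filter_upwards [hlim.eventually_lt_const (sub_pos.mpr hK'K)] with m hm
  have hsw : Summable fun l : ℕ => |ζ l| * w ((m : ℤ) - l) :=
    Summable.of_norm_bounded (hs.mul_right _) (hdom m)
  have hle : ∀ l : ℕ, ‖ζ l * v ((m : ℤ) - l)‖ ≤ |ζ l| * K' + |ζ l| * w ((m : ℤ) - l) := fun l => by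
    rw [Real.norm_eq_abs, abs_mul, ← mul_add]
    exact mul_le_mul_of_nonneg_left (hvw _) (abs_nonneg _)
  have h := tsum_of_norm_bounded ((hs.hasSum.mul_right K').add hsw.hasSum) hle
  rw [hζ, one_mul, Real.norm_eq_abs] at h
  linarith

theorem forcing_asympLe {n P : ℕ} {l : Filter ℕ} {b f : Fin n → Fin P → ℕ → ℝ}
    {c k : Fin n → ℕ → ℝ} {I : ℕ → ℝ} {bL fL : Fin n → Fin P → ℝ} {cL kL : Fin n → ℝ} {IL : ℝ}
    (hb0 : ∀ j p, 0 ≤ bL j p) (hc0 : ∀ j, 0 ≤ cL j)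
    (hb : ∀ j p, AsympLe l (b j p) (bL j p)) (hf : ∀ j p, AsympLe l (f j p) (fL j p))
    (hc : ∀ j, AsympLe l (c j) (cL j)) (hk : ∀ j, AsympLe l (k j) (kL j))
    (hI : AsympLe l I IL) :
    AsympLe l (fun m => ∑ j, ∑ p, b j p m * f j p m + ∑ j, c j m * k j m + I m)
      (∑ j, ∑ p, bL j p * fL j p + ∑ j, cL j * kL j + IL) :=
  ((AsympLe.sum _ fun j => AsympLe.sum _ fun p => (hb j p).mul (hb0 j p) (hf j p)).add
    (AsympLe.sum _ fun j => (hc j).mul (hc0 j) (hk j))).add hI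

/-- A scalar recursion with delay, contracting coefficient and bounded forcing keeps its solutions
bounded. -/
theorem bounded_of_contraction {y : ℤ → ℝ} {a h : ℕ → ℝ} {ν : ℕ → ℕ} {σ : ℕ} {B α H : ℝ}
    (hB : ∀ m : ℤ, m ≤ σ → |y m| ≤ B) (hα : α < 1) (ha : ∀ m, |a m| ≤ α) (hH : ∀ m, |h m| ≤ H)
    (hy : ∀ m : ℕ, σ ≤ m → y ((m : ℤ) + 1) = a m * y ((m : ℤ) - ν m) + h m) :
    ∃ M, ∀ m, |y m| ≤ M := by
  set M := max B (H / (1 - α)) with hM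
  have hMH : H ≤ M * (1 - α) := (div_le_iff₀ (by linarith)).mp (le_max_right _ _)
  have hind : ∀ t : ℕ, ∀ k : ℤ, k ≤ σ + t → |y k| ≤ M := by
    intro t
    induction t with
    | zero => exact fun k hk => (hB k (by simpa using hk)).trans (le_max_left _ _)
    | succ t ih =>
      intro k hk
      rcases le_or_gt k (σ + t) with hk' | hk'
      · exact ih k hk'
      · obtain rfl : k = ((σ + t : ℕ) : ℤ) + 1 := by push_cast at hk ⊢; omega
        rw [hy (σ + t) (by omega)]
        have h1 := ih (((σ + t : ℕ) : ℤ) - ν (σ + t)) (by push_cast; omega)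
        have h2 : |a (σ + t) * y (((σ + t : ℕ) : ℤ) - ν (σ + t))| ≤ α * M := by
          rw [abs_mul]
          exact mul_le_mul (ha _) h1 (abs_nonneg _) ((abs_nonneg _).trans (ha 0))
        linarith [abs_add_le (a (σ + t) * y (((σ + t : ℕ) : ℤ) - ν (σ + t))) (h (σ + t)),
          hH (σ + t)]
  exact ⟨M, fun m => hind m.toNat m (by omega)⟩

/-- Knaster–Tarski on the order interval above `s`. -/
theorem exists_fixed_point_ge {n : ℕ} {Φ : (Fin n → ℝ) → Fin n → ℝ} {s M : Fin n → ℝ}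
    (hmono : ∀ u v, s ≤ u → u ≤ v → Φ u ≤ Φ v) (hM : ∀ u, s ≤ u → Φ u ≤ M) (hs : s ≤ Φ s) :
    ∃ S, s ≤ S ∧ S = Φ S := by
  set A : Set (Fin n → ℝ) := {u | s ≤ u ∧ u ≤ Φ u} with hA
  have hbdd : BddAbove A := ⟨M, fun u hu => hu.2.trans (hM u hu.1)⟩
  have hsA : s ∈ A := ⟨le_rfl, hs⟩
  have hsS : s ≤ sSup A := le_csSup hbdd hsA
  have h1 : sSup A ≤ Φ (sSup A) :=
    csSup_le ⟨s, hsA⟩ fun u hu => hu.2.trans (hmono _ _ hu.1 (le_csSup hbdd hu))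
  have h2 : Φ (sSup A) ≤ sSup A :=
    le_csSup hbdd ⟨hsS.trans h1, hmono _ _ hsS h1⟩
  exact ⟨sSup A, hsS, le_antisymm h1 h2⟩

/-! ### The fixed point system -/

/-- Lemma 3.2, item i: under (H1)-(H5) and (H6), for every solution of model (1) with
bounded initial condition there is a nonnegative vector `S` bounding the limsups of the
components and solving the fixed point system (3.8). -/
theorem limsup_bound_system_H6
    (n P : ℕ) (hn : 1 ≤ n) (hP : 1 ≤ P)
    (a : Fin n → ℕ → ℝ) (ν : Fin n → ℕ → ℕ)
    (b : Fin n → Fin n → Fin P → ℕ → ℝ)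
    (τ : Fin n → Fin n → Fin P → ℕ → ℕ)
    (c : Fin n → Fin n → ℕ → ℝ)
    (ζ : Fin n → Fin n → ℕ → ℝ)
    (I : Fin n → ℕ → ℝ)
    (f : Fin n → Fin n → Fin P → ℝ → ℝ)
    (g : Fin n → Fin n → ℝ → ℝ)
    (F : Fin n → Fin n → Fin P → ℝ)
    (G : Fin n → Fin n → ℝ)
    (σ : ℕ) (x : ℤ → Fin n → ℝ)
    -- `x` has bounded initial condition: it is bounded on `(-∞, σ] ∩ ℤ`
    (hinit : ∃ B : ℝ, ∀ m : ℤ, m ≤ (σ : ℤ) → ‖x m‖ ≤ B)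
    -- the inner series converge absolutely
    (habs : ∀ (i j : Fin n) (m : ℤ), Summable fun l : ℕ => |ζ i j l * g i j (x (m - l) j)|)
    -- `x` is a solution of model (1) from the initial time `σ` on
    (hmodel : ∀ m : ℕ, σ ≤ m → ∀ i : Fin n,
      x ((m : ℤ) + 1) i =
        a i m * x ((m : ℤ) - ν i m) i
        + ∑ j, ∑ p, b i j p m * f i j p (x ((m : ℤ) - τ i j p m) j)
        + ∑ j, c i j m * ∑' l : ℕ, ζ i j l * g i j (x ((m : ℤ) - l) j)
        + I i m)
    -- (H1)
    (hH1 : ∀ i, BddAbove (Set.range fun m : ℕ => |a i m|) ∧ (⨆ m : ℕ, |a i m|) < 1)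
    -- (H2)
    (hH2ν : ∀ i, Filter.Tendsto (fun m : ℕ => (m : ℤ) - ν i m) Filter.atTop Filter.atTop)
    (hH2τ : ∀ i j p,
      Filter.Tendsto (fun m : ℕ => (m : ℤ) - τ i j p m) Filter.atTop Filter.atTop)
    -- (H3)
    (hH3b : ∀ i j p, BddAbove (Set.range fun m : ℕ => |b i j p m|))
    (hH3c : ∀ i j, BddAbove (Set.range fun m : ℕ => |c i j m|))
    -- (H4)
    (hH4 : ∀ i j, ∑' l : ℕ, |ζ i j l| = 1)
    -- (H5)
    (hH5 : ∀ i, Summable fun m : ℕ => |I i m|)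
    -- (H6)
    (hH6f : ∀ i j p, Continuous (f i j p) ∧ 0 < F i j p ∧
      (∀ u : ℝ, 1 < |u| → |f i j p u| ≤ F i j p) ∧
      (∀ u : ℝ, u ≠ 0 → |u| ≤ 1 → |f i j p u| < F i j p * |u|))
    (hH6g : ∀ i j, Continuous (g i j) ∧ 0 < G i j ∧
      (∀ u : ℝ, 1 < |u| → |g i j u| ≤ G i j) ∧
      (∀ u : ℝ, u ≠ 0 → |u| ≤ 1 → |g i j u| < G i j * |u|))
    :
    ∃ S : Fin n → ℝ, (∀ i, 0 ≤ S i) ∧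
      (∀ i, Filter.limsup (fun m : ℤ => |x m i|) Filter.atTop ≤ S i) ∧
      ∀ i, S i = (1 / (1 - Filter.limsup (fun m : ℕ => |a i m|) Filter.atTop)) *
        ∑ j, (Filter.limsup (fun m : ℕ => |c i j m|) Filter.atTop * fstar (g i j) (S j)
          + ∑ p, Filter.limsup (fun m : ℕ => |b i j p m|) Filter.atTop * fstar (f i j p) (S j)) := by
  obtain ⟨B, hB⟩ := hinit
  have hfF := fun i j p => abs_le_of_H6 (hH6f i j p)
  have hgG := fun i j => abs_le_of_H6 (hH6g i j)
  have ha : ∀ i m, |a i m| ≤ ⨆ m : ℕ, |a i m| := fun i m => le_ciSup (hH1 i).1 m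
  have hb : ∀ i j p m, |b i j p m| ≤ ⨆ m : ℕ, |b i j p m| := fun i j p m =>
    le_ciSup (hH3b i j p) m
  have hc : ∀ i j m, |c i j m| ≤ ⨆ m : ℕ, |c i j m| := fun i j m => le_ciSup (hH3c i j) m
  set h : Fin n → ℕ → ℝ := fun i m =>
    ∑ j, ∑ p, b i j p m * f i j p (x ((m : ℤ) - τ i j p m) j)
      + ∑ j, c i j m * ∑' l : ℕ, ζ i j l * g i j (x ((m : ℤ) - l) j) + I i m with hh
  have hstep : ∀ m : ℕ, σ ≤ m → ∀ i,
      x ((m : ℤ) + 1) i = a i m * x ((m : ℤ) - ν i m) i + h i m := fun m hm i => by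
    rw [hmodel m hm i, hh]; ring
  have hbound : ∀ i, ∃ M, ∀ m, |x m i| ≤ M := by
    intro i
    have hI : ∀ m, |I i m| ≤ ∑' m, |I i m| := fun m =>
      (hH5 i).le_tsum m fun _ _ => abs_nonneg _
    have hforce := forcing_asympLe (l := ⊤)
      (fun j p => (abs_nonneg _).trans (hb i j p 0)) (fun j => (abs_nonneg _).trans (hc i j 0))
      (fun j p => .of_le (hb i j p))
      (fun j p => .of_le fun m : ℕ => hfF i j p (x ((m : ℤ) - τ i j p m) j))
      (fun j => .of_le (hc i j))
      (fun j => .of_le fun m : ℕ =>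
        abs_kernel_le (w := fun l : ℕ => g i j (x ((m : ℤ) - l) j)) (hH4 i j) fun l => hgG i j _)
      (.of_le hI)
    exact bounded_of_contraction
      (fun m hm => (norm_le_pi_norm (x m) i).trans (hB m hm)) (hH1 i).2 (ha i)
      (eventually_top.mp (hforce _ (lt_add_one _))) fun m hm => hstep m hm i
  choose M hM using hbound
  set aL : Fin n → ℝ := fun i => limsup (fun m : ℕ => |a i m|) atTop with haL
  set bL : Fin n → Fin n → Fin P → ℝ := fun i j p =>
    limsup (fun m : ℕ => |b i j p m|) atTop with hbL
  set cL : Fin n → Fin n → ℝ := fun i j => limsup (fun m : ℕ => |c i j m|) atTop with hcL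
  set s : Fin n → ℝ := fun i => limsup (fun m : ℤ => |x m i|) atTop with hs
  have haL0 : ∀ i, 0 ≤ aL i := fun i => limsup_abs_nonneg (ha i)
  have hbL0 : ∀ i j p, 0 ≤ bL i j p := fun i j p => limsup_abs_nonneg (hb i j p)
  have hcL0 : ∀ i j, 0 ≤ cL i j := fun i j => limsup_abs_nonneg (hc i j)
  have hs0 : ∀ i, 0 ≤ s i := fun i => limsup_abs_nonneg (hM i)
  have haL1 : ∀ i, 0 < 1 - aL i := fun i =>
    sub_pos.mpr ((AsympLe.of_le (ha i)).limsup_le.trans_lt (hH1 i).2)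
  have hx : ∀ i, AsympLe atTop (fun m => x m i) (s i) := fun i => .of_bounded (hM i)
  have hsle : ∀ i, s i ≤ aL i * s i + ∑ j, (cL i j * fstar (g i j) (s j)
      + ∑ p, bL i j p * fstar (f i j p) (s j)) := by
    intro i
    have hforce := forcing_asympLe (hbL0 i) (hcL0 i)
      (fun j p => .of_bounded (hb i j p))
      (fun j p => ((hx j).activation (hH6f i j p).1 (hs0 j)).comp (hH2τ i j p))
      (fun j => .of_bounded (hc i j))
      (fun j => .kernel (hH4 i j) (fun k => hgG i j _) ((hx j).activation (hH6g i j).1 (hs0 j)))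
      (.of_tendsto_zero (hH5 i).of_abs.tendsto_atTop_zero)
    have hrhs := ((AsympLe.of_bounded (ha i)).mul (haL0 i) ((hx i).comp (hH2ν i))).add hforce
    refine AsympLe.limsup_le fun K hK => ?_
    rw [Finset.sum_add_distrib, add_comm (∑ j, cL i j * _), ← add_zero (_ + ∑ j, cL i j * _)] at hK
    obtain ⟨N, hN⟩ := eventually_atTop.mp (hrhs K hK)
    filter_upwards [eventually_ge_atTop ((max N σ : ℕ) + 1 : ℤ)] with m hm
    obtain ⟨k, rfl⟩ : ∃ k : ℕ, m = (k : ℤ) + 1 := ⟨(m - 1).toNat, by omega⟩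
    rw [hstep k (by omega) i]
    exact hN k (by omega)
  have hfix := exists_fixed_point_ge (s := s)
    (Φ := fun u i => (1 / (1 - aL i)) * ∑ j, (cL i j * fstar (g i j) (u j)
      + ∑ p, bL i j p * fstar (f i j p) (u j)))
    (M := fun i => (1 / (1 - aL i)) * ∑ j, (cL i j * G i j + ∑ p, bL i j p * F i j p))
    ?_ ?_ ?_
  · obtain ⟨S, hsS, hS⟩ := hfix
    exact ⟨S, fun i => (hs0 i).trans (hsS i), hsS, fun i => congrFun hS i⟩
  · intro u v hu huv i
    have := (haL1 i).le
    have hu0 : ∀ j, 0 ≤ u j := fun j => (hs0 j).trans (hu j)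
    dsimp only
    gcongr with j _ p
    · exact hcL0 i j
    · exact fstar_mono (hH6g i j).1 (hu0 j) (huv j)
    · exact hbL0 i j _
    · exact fstar_mono (hH6f i j _).1 (hu0 j) (huv j)
  · intro u hu i
    have := (haL1 i).le
    have hu0 : ∀ j, 0 ≤ u j := fun j => (hs0 j).trans (hu j)
    dsimp only
    gcongr with j _ p
    · exact hcL0 i j
    · exact fstar_le (hu0 j) fun y _ => hgG i j y
    · exact hbL0 i j _
    · exact fstar_le (hu0 j) fun y _ => hfF i j _ y
  · intro i
    dsimp only
    rw [one_div, inv_mul_eq_div, le_div_iff₀ (haL1 i)]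
    linarith [hsle i]
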